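/- (Theorem B) Let m ∈ ℕ and let w be a (1/(m+1))-concise group-word. If G is a BFC(w)-group, then the iterated commutator subgroup [w(G), G, ..., G] (with G repeated m times) is BFC-embedded in G. -/

import Mathlib

/-- The set of `w`-values in `G`: images of the word `w` (an element of the free
group on `n` generators) under all homomorphisms `FreeGroup (Fin n) →* G`. -/
def wValues {n : ℕ} (w : FreeGroup (Fin n)) (G : Type*) [Group G] : Set G :=
  Set.range fun g : Fin n → G => FreeGroup.lift g w

/-- `G_w^* = G_w ∪ G_w⁻¹`. -/
def wValuesStar {n : ℕ} (w : FreeGroup (Fin n)) (G : Type*) [Group G] : Set G :=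
  wValues w G ∪ (wValues w G)⁻¹

/-- The verbal subgroup `w(G)` generated by all `w`-values. -/
def verbalSubgroup {n : ℕ} (w : FreeGroup (Fin n)) (G : Type*) [Group G] : Subgroup G :=
  Subgroup.closure (wValues w G)

/-- The iterated commutator subgroup `[H, G, ..., G]` with `G` repeated `k` times. -/
def iterCommSub (G : Type*) [Group G] (H : Subgroup G) : ℕ → Subgroup G
  | 0 => H
  | k + 1 => ⁅iterCommSub G H k, (⊤ : Subgroup G)⁆

/-- The set of conjugates `x^S = {g⁻¹ x g : g ∈ S}`. -/
def conjSet {G : Type*} [Group G] (x : G) (S : Set G) : Set G :=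
  (fun g => g⁻¹ * x * g) '' S

/-- `G` is an `FC(w)`-group: every conjugacy set `x^{G_w}` is finite. -/
def IsFCw {n : ℕ} (w : FreeGroup (Fin n)) (G : Type*) [Group G] : Prop :=
  ∀ x : G, (conjSet x (wValues w G)).Finite

/-- `G` is a `BFC(w)`-group: the sets `x^{G_w}` are finite of bounded size. -/
def IsBFCw {n : ℕ} (w : FreeGroup (Fin n)) (G : Type*) [Group G] : Prop :=
  ∃ c : ℕ, ∀ x : G,
    (conjSet x (wValues w G)).Finite ∧ (conjSet x (wValues w G)).ncard ≤ c

/-- A subgroup `H` is `FC`-embedded in `G` if `x^H` is finite for every `x ∈ G`. -/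
def IsFCEmbedded {G : Type*} [Group G] (H : Subgroup G) : Prop :=
  ∀ x : G, (conjSet x (H : Set G)).Finite

/-- A subgroup `H` is `BFC`-embedded in `G` if the sets `x^H` are finite of bounded size. -/
def IsBFCEmbedded {G : Type*} [Group G] (H : Subgroup G) : Prop :=
  ∃ d : ℕ, ∀ x : G,
    (conjSet x (H : Set G)).Finite ∧ (conjSet x (H : Set G)).ncard ≤ d

/-- A word `w` is `(1/k)`-concise (`k ≥ 1`): in every group `G` with `G_w` finite,
the subgroup `[w(G), G, ..., G]` (with `G` repeated `k - 1` times) is finite. -/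
def IsFracConcise {n : ℕ} (w : FreeGroup (Fin n)) (k : ℕ) : Prop :=
  ∀ (G : Type*) [Group G], (wValues w G).Finite →
    ((iterCommSub G (verbalSubgroup w G) (k - 1) : Subgroup G) : Set G).Finite

/-- A word `w` is `0`-concise: in every group `G` with `G_w` finite, some iterated
commutator subgroup `[w(G), G, ..., G]` is finite. -/
def IsZeroConcise {n : ℕ} (w : FreeGroup (Fin n)) : Prop :=
  ∀ (G : Type*) [Group G], (wValues w G).Finite →
    ∃ k : ℕ, ((iterCommSub G (verbalSubgroup w G) k : Subgroup G) : Set G).Finite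

/-- The commutator `[a, b] = a⁻¹ b⁻¹ a b`. -/
def pcomm {G : Type*} [Group G] (a b : G) : G := a⁻¹ * b⁻¹ * a * b

/-- The word `w(x_1, ..., x_n)` viewed in the free group on `n + m` generators. -/
def extendWord {n : ℕ} (m : ℕ) (w : FreeGroup (Fin n)) : FreeGroup (Fin (n + m)) :=
  FreeGroup.map (Fin.castAdd m) w

/-- The word `v = [w(x_1, ..., x_n), x_{n+1}, ..., x_{n+m}]`. -/
def commWord {n : ℕ} (m : ℕ) (w : FreeGroup (Fin n)) : FreeGroup (Fin (n + m)) :=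
  (List.ofFn fun i : Fin m => FreeGroup.of (Fin.natAdd n i)).foldl pcomm (extendWord m w)

/-- The iterated commutator `[y, b, ..., b]` with `b` repeated `k` times. -/
def iterPcomm {G : Type*} [Group G] (y b : G) : ℕ → G
  | 0 => y
  | k + 1 => pcomm (iterPcomm y b k) b

/-!
The subgroup `[w(G), G, ..., G]` is the verbal subgroup `v(G)` of `v = commWord m w`.

*Finiteness.* Let `G` be an `FC(w)`-group. If `G` is finitely generated, an inner automorphism is
determined by its values on the generators, so `Inn G` has only finitely many `w`-values;
conciseness then makes `v(Inn G)` finite, and `x^{v(G)}` is its orbit on `x`. In general `x^{G_v}`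
is finite, hence realised by the `v`-values of a single finitely generated subgroup `K`, and then
`x^{v(G)} = x^{v(K)}`. Finiteness of `x^{G_v}` comes from that of `x^{G_w}` by induction on `m`,
which needs `x^S` and `x^{S⁻¹}` to be finite together for `S = G_w`: inside a finitely generated
subgroup, `S` acts as a finite normal set of automorphisms, which meets the left and the right
cosets of the stabilizer of `x` equally often.

*Uniformity.* A bound on `|x^{G_w}|` passes to ultrapowers, so there `v` has the finiteness
property. For `S = G_v` the sets `x^{S^d}` grow strictly in `d` until they exhaust `x^{v(G)}`; if
`|x^{v(G)}|` were unbounded in `G`, there would be elements `x_i` with `|x_i^{S^d}| > d` for all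
`d ≤ i`. The class of `(x_i)` in the ultrapower would then have more than `d` conjugates by products
of `d` `v`-values, for every `d`, hence infinitely many conjugates under the verbal subgroup.
-/

open Filter Function
open scoped Pointwise commutatorElement

section Cardinality

variable {α β γ : Type*}

theorem natCast_lt_encard_iff_exists_injective {s : Set α} {k : ℕ} :
    (k : ℕ∞) < s.encard ↔ ∃ f : Fin (k + 1) → α, Injective f ∧ ∀ j, f j ∈ s := by
  rw [← ENat.add_one_le_iff (ENat.natCast_ne_top k)]
  constructor
  · intro h
    obtain ⟨t, hts, htk⟩ := Set.exists_subset_encard_eq h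
    have htfin : t.Finite := Set.finite_of_encard_eq_coe htk
    have htcard : Nat.card t = k + 1 := by
      rw [Nat.card_coe_set_eq, Set.ncard, htk]
      rfl
    let e : t ≃ Fin (k + 1) := htfin.equivFinOfCardEq htcard
    exact ⟨fun j => e.symm j, Subtype.val_injective.comp e.symm.injective,
      fun j => hts (e.symm j).2⟩
  · rintro ⟨f, hf, hfs⟩
    calc (k : ℕ∞) + 1 = (Set.range f).encard := by
          rw [← Set.image_univ, hf.encard_image]
          simp
      _ ≤ s.encard := Set.encard_le_encard (Set.range_subset_iff.2 hfs)

theorem cast_card_image_eq_sum_inv_card_fiber [DecidableEq β] (s : Finset α) (f : α → β) :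
    ((s.image f).card : ℚ) = ∑ a ∈ s, ((s.filter fun b => f b = f a).card : ℚ)⁻¹ := by
  rw [Finset.card_eq_sum_ones, Nat.cast_sum]
  refine Finset.sum_image' _ fun a ha => ?_
  have hfiber : (s.filter fun b => f b = f a).card ≠ 0 :=
    Finset.card_ne_zero_of_mem (Finset.mem_filter.2 ⟨ha, rfl⟩)
  calc ((1 : ℕ) : ℚ)
      = ∑ b ∈ s with f b = f a, ((s.filter fun c => f c = f a).card : ℚ)⁻¹ := by
        simp [hfiber]
    _ = ∑ b ∈ s with f b = f a, ((s.filter fun c => f c = f b).card : ℚ)⁻¹ :=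
        Finset.sum_congr rfl fun b hb => by rw [(Finset.mem_filter.1 hb).2]

theorem card_image_eq_of_card_fiber_eq [DecidableEq β] [DecidableEq γ] {s : Finset α}
    {f : α → β} {g : α → γ}
    (h : ∀ a ∈ s, (s.filter fun b => f b = f a).card = (s.filter fun b => g b = g a).card) :
    (s.image f).card = (s.image g).card := by
  rw [← Nat.cast_inj (R := ℚ), cast_card_image_eq_sum_inv_card_fiber,
    cast_card_image_eq_sum_inv_card_fiber]
  exact Finset.sum_congr rfl fun a ha => by rw [h a ha]

theorem encard_image_smul_eq_encard_image_inv_smul {A X : Type*} [Group A] [MulAction A X]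
    {S : Set A} (hS : S.Finite) (hconj : ∀ a, ∀ b ∈ S, a * b * a⁻¹ ∈ S) (x : X) :
    ((fun a => a • x) '' S).encard = ((fun a => a⁻¹ • x) '' S).encard := by
  classical
  lift S to Finset A using hS
  rw [← Finset.coe_image, ← Finset.coe_image, Set.encard_coe_eq_coe_finsetCard,
    Set.encard_coe_eq_coe_finsetCard]
  congr 1
  refine card_image_eq_of_card_fiber_eq fun a _ => ?_
  -- For `C` the stabilizer of `x`, conjugation by `a` carries `S ∩ a C` onto `S ∩ C a`.
  refine Finset.card_bij' (fun b _ => a⁻¹ * b * a) (fun b _ => a * b * a⁻¹) ?_ ?_ ?_ ?_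
  · intro b hb
    obtain ⟨hbS, hbx⟩ := Finset.mem_filter.1 hb
    refine Finset.mem_filter.2 ⟨by simpa using hconj a⁻¹ b hbS, ?_⟩
    have hbx' : b⁻¹ • a • x = x := inv_smul_eq_iff.2 hbx.symm
    simp only [mul_inv_rev, inv_inv, mul_smul, hbx']
  · intro b hb
    obtain ⟨hbS, hbx⟩ := Finset.mem_filter.1 hb
    refine Finset.mem_filter.2 ⟨hconj a b hbS, ?_⟩
    rw [mul_smul, mul_smul, ← hbx, smul_inv_smul]
  · intro b _; group
  · intro b _; group

end Cardinality

section WValues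

variable {n : ℕ} {w : FreeGroup (Fin n)} {G H : Type*} [Group G] [Group H]

theorem map_freeGroup_lift {α : Type*} (φ : G →* H) (g : α → G) (u : FreeGroup α) :
    φ (FreeGroup.lift g u) = FreeGroup.lift (φ ∘ g) u :=
  FreeGroup.lift_unique (φ.comp (FreeGroup.lift g)) (by simp)

theorem map_mem_wValues (φ : G →* H) {s : G} (hs : s ∈ wValues w G) : φ s ∈ wValues w H := by
  obtain ⟨g, rfl⟩ := hs
  exact ⟨φ ∘ g, (map_freeGroup_lift φ g w).symm⟩

theorem conj_mem_wValues {s : G} (hs : s ∈ wValues w G) (g : G) : g * s * g⁻¹ ∈ wValues w G :=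
  map_mem_wValues (MulAut.conj g).toMonoidHom hs

theorem one_mem_wValues : (1 : G) ∈ wValues w G :=
  map_mem_wValues (1 : G →* G) (s := FreeGroup.lift (fun _ => 1) w) ⟨_, rfl⟩

theorem image_wValues_of_surjective {φ : G →* H} (hφ : Surjective φ) :
    φ '' wValues w G = wValues w H := by
  refine Set.Subset.antisymm (Set.image_subset_iff.2 fun _ => map_mem_wValues φ) ?_
  rintro _ ⟨g, rfl⟩
  obtain ⟨a, rfl⟩ := hφ.comp_left g
  exact ⟨_, ⟨a, rfl⟩, map_freeGroup_lift φ a w⟩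

theorem map_verbalSubgroup_of_surjective {φ : G →* H} (hφ : Surjective φ) :
    (verbalSubgroup w G).map φ = verbalSubgroup w H := by
  rw [verbalSubgroup, MonoidHom.map_closure, image_wValues_of_surjective hφ, verbalSubgroup]

theorem mem_wValues_pi {ι : Type*} {s : ι → G} :
    s ∈ wValues w (ι → G) ↔ ∀ i, s i ∈ wValues w G := by
  refine ⟨fun hs i => map_mem_wValues (Pi.evalMonoidHom (fun _ => G) i) hs, fun hs => ?_⟩
  choose g hg using hs
  refine ⟨fun j i => g i j, funext fun i => ?_⟩
  rw [← hg i]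
  exact map_freeGroup_lift (Pi.evalMonoidHom (fun _ => G) i) _ w

theorem exists_fg_subset_image_wValues {F : Set G} (hF : F.Finite) (hFw : F ⊆ wValues w G)
    (x : G) : ∃ K : Subgroup G, K.FG ∧ x ∈ K ∧ F ⊆ K.subtype '' wValues w K := by
  choose! g hg using fun s (hs : s ∈ F) => hFw hs
  let A : Set G := insert x (⋃ s ∈ F, Set.range (g s))
  have hA : A.Finite := (hF.biUnion fun s _ => Set.finite_range (g s)).insert x
  refine ⟨Subgroup.closure A, Subgroup.fg_iff _ |>.2 ⟨A, rfl, hA⟩,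
    Subgroup.subset_closure (Set.mem_insert _ _), fun s hs => ?_⟩
  have hgA (i : Fin n) : g s i ∈ Subgroup.closure A :=
    Subgroup.subset_closure (.inr (Set.mem_biUnion hs ⟨i, rfl⟩))
  refine ⟨_, ⟨fun i => ⟨g s i, hgA i⟩, rfl⟩, ?_⟩
  rw [map_freeGroup_lift]
  exact hg s hs

end WValues

section CommWord

variable {n : ℕ} {w : FreeGroup (Fin n)} {G : Type*} [Group G]

theorem closure_image2_pcomm_normal (S : Set G) :
    (Subgroup.closure (Set.image2 pcomm S Set.univ)).Normal := by
  refine ⟨fun a ha g => ?_⟩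
  induction ha using Subgroup.closure_induction with
  | mem _ hz =>
    obtain ⟨s, hs, h, -, rfl⟩ := hz
    have hconj : g * pcomm s h * g⁻¹ = (pcomm s g⁻¹)⁻¹ * pcomm s (h * g⁻¹) := by
      simp only [pcomm]; group
    have hmem (k : G) : pcomm s k ∈ Subgroup.closure (Set.image2 pcomm S Set.univ) :=
      Subgroup.subset_closure ⟨s, hs, k, trivial, rfl⟩
    exact hconj ▸ mul_mem (inv_mem (hmem _)) (hmem _)
  | one => simp
  | mul a b _ _ iha ihb => simpa only [conj_mul] using mul_mem iha ihb
  | inv a _ iha => simpa only [conj_inv] using inv_mem iha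

theorem closure_image2_pcomm (S : Set G) :
    Subgroup.closure (Set.image2 pcomm S Set.univ) = ⁅Subgroup.closure S, ⊤⁆ := by
  have pcomm_eq (a g : G) : pcomm a g = ⁅a⁻¹, g⁻¹⁆ := by
    simp only [pcomm, commutatorElement_def, inv_inv]
  refine le_antisymm ?_ ?_
  · rw [Subgroup.closure_le]
    rintro _ ⟨s, hs, g, -, rfl⟩
    rw [SetLike.mem_coe, pcomm_eq]
    exact Subgroup.commutator_mem_commutator (inv_mem (Subgroup.subset_closure hs))
      (Subgroup.mem_top _)
  · have hN := closure_image2_pcomm_normal S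
    let π := QuotientGroup.mk' (Subgroup.closure (Set.image2 pcomm S Set.univ))
    have hcentral : Subgroup.closure S ≤ (Subgroup.center _).comap π := by
      refine (Subgroup.closure_le _).2 fun s hs => Subgroup.mem_center_iff.2 fun q => ?_
      obtain ⟨g, rfl⟩ := QuotientGroup.mk'_surjective _ q
      refine QuotientGroup.eq.2 (Subgroup.subset_closure ⟨s, hs, g, trivial, ?_⟩)
      simp only [pcomm, mul_inv_rev, mul_assoc]
    refine Subgroup.commutator_le.2 fun a ha g _ => (QuotientGroup.eq_one_iff _).1 ?_
    change π ⁅a, g⁆ = 1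
    rw [map_commutatorElement, commutatorElement_eq_one_iff_mul_comm]
    exact (Subgroup.mem_center_iff.1 (hcentral ha) (π g)).symm

theorem lift_commWord (m : ℕ) (w : FreeGroup (Fin n)) (g : Fin (n + m) → G) :
    FreeGroup.lift g (commWord m w) = (List.ofFn fun i => g (Fin.natAdd n i)).foldl pcomm
      (FreeGroup.lift (g ∘ Fin.castAdd m) w) := by
  have map_foldl_pcomm (l : List (FreeGroup (Fin (n + m)))) (u : FreeGroup (Fin (n + m))) :
      FreeGroup.lift g (l.foldl pcomm u) =
        (l.map (FreeGroup.lift g)).foldl pcomm (FreeGroup.lift g u) := by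
    rw [List.foldl_map]
    exact (List.foldl_hom _ fun a b => by simp [pcomm]).symm
  have lift_extendWord :
      FreeGroup.lift g (extendWord m w) = FreeGroup.lift (g ∘ Fin.castAdd m) w :=
    FreeGroup.lift_unique ((FreeGroup.lift g).comp (FreeGroup.map (Fin.castAdd m))) (by simp)
  rw [commWord, map_foldl_pcomm, List.map_ofFn, lift_extendWord]
  simp [Function.comp_def]

theorem mem_wValues_commWord {m : ℕ} {z : G} : z ∈ wValues (commWord m w) G ↔
    ∃ s ∈ wValues w G, ∃ h : Fin m → G, (List.ofFn h).foldl pcomm s = z := by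
  constructor
  · rintro ⟨g, rfl⟩
    exact ⟨_, ⟨_, rfl⟩, _, (lift_commWord m w g).symm⟩
  · rintro ⟨_, ⟨g, rfl⟩, h, rfl⟩
    refine ⟨Fin.append g h, ?_⟩
    simp only [lift_commWord, Fin.append_right]
    congr 3
    ext i
    simp

theorem wValues_commWord_zero (w : FreeGroup (Fin n)) (G : Type*) [Group G] :
    wValues (commWord 0 w) G = wValues w G := by
  ext z
  simp [mem_wValues_commWord]

theorem wValues_commWord_succ (m : ℕ) (w : FreeGroup (Fin n)) (G : Type*) [Group G] :
    wValues (commWord (m + 1) w) G = Set.image2 pcomm (wValues (commWord m w) G) Set.univ := by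
  ext z
  simp only [mem_wValues_commWord, Set.mem_image2, Set.mem_univ, true_and]
  constructor
  · rintro ⟨s, hs, h, rfl⟩
    refine ⟨_, ⟨s, hs, fun i => h i.castSucc, rfl⟩, h (Fin.last m), ?_⟩
    rw [List.ofFn_succ', List.concat_eq_append, List.foldl_concat]
  · rintro ⟨_, ⟨s, hs, h, rfl⟩, g, rfl⟩
    refine ⟨s, hs, Fin.snoc h g, ?_⟩
    rw [List.ofFn_succ', List.concat_eq_append, List.foldl_concat]
    simp

theorem verbalSubgroup_commWord (m : ℕ) (w : FreeGroup (Fin n)) (G : Type*) [Group G] :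
    verbalSubgroup (commWord m w) G = iterCommSub G (verbalSubgroup w G) m := by
  induction m with
  | zero => rw [verbalSubgroup, wValues_commWord_zero, iterCommSub, verbalSubgroup]
  | succ m ih =>
    rw [verbalSubgroup, wValues_commWord_succ, closure_image2_pcomm, iterCommSub, ← ih,
      verbalSubgroup]

end CommWord

section Conjugates

variable {G H : Type*} [Group G] [Group H] {S : Set G} {x : G}

theorem image_conjSet (φ : G →* H) (x : G) (S : Set G) :
    φ '' conjSet x S = conjSet (φ x) (φ '' S) := by
  simp only [conjSet, Set.image_image, map_mul, map_inv]

theorem conjSet_mono {S T : Set G} (h : S ⊆ T) (x : G) : conjSet x S ⊆ conjSet x T :=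
  Set.image_mono h

theorem self_mem_conjSet (hS : 1 ∈ S) : x ∈ conjSet x S :=
  ⟨1, hS, by simp⟩

theorem conjSet_closure_subset {E : Set G} (hE : E.Finite) (hx : x ∈ E)
    (hS : ∀ s ∈ S, ∀ y ∈ E, s⁻¹ * y * s ∈ E) :
    conjSet x (Subgroup.closure S : Set G) ⊆ E := by
  have := hE.to_subtype
  have hnormalizer : Subgroup.closure S ≤ Subgroup.normalizer E := by
    refine (Subgroup.closure_le _).2 fun s hs => inv_mem_iff.1 ?_
    exact Subgroup.mem_normalizer_fintype fun y hy => by simpa using hS s hs y hy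
  rintro _ ⟨g, hg, rfl⟩
  exact (Subgroup.mem_set_normalizer_iff''.1 (hnormalizer hg) x).1 hx

theorem conjSet_closure_subset_of_encard_le (hS : 1 ∈ S) {d : ℕ}
    (hd : (conjSet x (S ^ d)).encard ≤ d) :
    conjSet x (Subgroup.closure S : Set G) ⊆ conjSet x (S ^ d) := by
  have hmono {i j : ℕ} (hij : i ≤ j) : conjSet x (S ^ i) ⊆ conjSet x (S ^ j) :=
    conjSet_mono (Set.pow_subset_pow_right hS hij) x
  have hfin : (conjSet x (S ^ d)).Finite := Set.finite_of_encard_le_coe hd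
  obtain ⟨k, hkd, hk⟩ : ∃ k < d, conjSet x (S ^ (k + 1)) ⊆ conjSet x (S ^ k) := by
    by_contra! hgrow
    have hcard : ∀ k ≤ d, (k : ℕ∞) < (conjSet x (S ^ k)).encard := by
      intro k hkd
      induction k with
      | zero => simp [conjSet]
      | succ k ih =>
        refine (Order.add_one_le_of_lt (ih (by lia))).trans_lt ?_
        exact (hfin.subset (hmono (by lia))).encard_lt_encard
          ⟨hmono k.le_succ, hgrow k (by lia)⟩
    exact (hcard d le_rfl).not_ge hd
  refine (conjSet_closure_subset (hfin.subset (hmono hkd.le)) ?_ ?_).trans (hmono hkd.le)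
  · exact self_mem_conjSet (Set.one_mem_pow hS)
  · rintro s hs _ ⟨h, hh, rfl⟩
    refine hk ⟨h * s, ?_, by simp only; group⟩
    exact pow_succ S k ▸ Set.mul_mem_mul hh hs

theorem exists_lt_encard_conjSet_pow (hS : 1 ∈ S)
    (h : ¬ IsBFCEmbedded (Subgroup.closure S)) (k : ℕ) :
    ∃ x : G, ∀ d ≤ k, (d : ℕ∞) < (conjSet x (S ^ d)).encard := by
  simp only [IsBFCEmbedded, ← Set.encard_le_coe_iff_finite_ncard_le] at h
  push Not at h
  obtain ⟨x, hx⟩ := h k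
  refine ⟨x, fun d hdk => lt_of_not_ge fun hd => hx.not_ge ?_⟩
  calc (conjSet x (Subgroup.closure S : Set G)).encard
      ≤ (conjSet x (S ^ d)).encard :=
        Set.encard_le_encard (conjSet_closure_subset_of_encard_le hS hd)
    _ ≤ d := hd
    _ ≤ k := mod_cast hdk

theorem countable_of_fg (G : Type*) [Group G] [Group.FG G] : Countable G := by
  obtain ⟨α, _, φ, hφ⟩ := Group.fg_iff_exists_freeGroup_hom_surjective_finite.1 ‹Group.FG G›
  exact hφ.countable

theorem finite_image_conj_of_fg [Group.FG G] (h : ∀ x, (conjSet x S).Finite) :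
    (MulAut.conj '' S).Finite := by
  obtain ⟨A, hA, hAfin⟩ := Group.fg_iff.1 ‹Group.FG G›
  have := hAfin.to_subtype
  let restrictInv : MulAut G → A → G := fun α a => α⁻¹ a
  have hrestrictInv : Injective restrictInv := by
    intro α β hαβ
    have hEqOn : Set.EqOn (α⁻¹).toMonoidHom (β⁻¹).toMonoidHom A := fun a ha =>
      congrFun hαβ ⟨a, ha⟩
    exact inv_injective (MulEquiv.toMonoidHom_injective (MonoidHom.eq_of_eqOn_dense hA hEqOn))
  refine .of_finite_image (f := restrictInv) ?_ hrestrictInv.injOn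
  refine (Set.Finite.pi' fun a : A => h a).subset ?_
  rintro _ ⟨_, ⟨s, hs, rfl⟩, rfl⟩ a
  exact ⟨s, hs, by simp [restrictInv]⟩

end Conjugates

section FC

variable {n : ℕ} {w : FreeGroup (Fin n)} {G : Type*} [Group G]

theorem image_conjSet_wValues_subset {H : Type*} [Group H] (φ : G →* H) (x : G) :
    φ '' conjSet x (wValues w G) ⊆ conjSet (φ x) (wValues w H) := by
  rw [image_conjSet]
  refine conjSet_mono ?_ _
  rintro _ ⟨s, hs, rfl⟩
  exact map_mem_wValues φ hs

theorem IsFCw.subgroup (h : IsFCw w G) (K : Subgroup G) : IsFCw w K := by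
  intro x
  refine .of_finite_image (f := K.subtype) ?_ K.subtype_injective.injOn
  exact (h x).subset (image_conjSet_wValues_subset K.subtype x)

theorem IsFCw.encard_conjSet_inv_of_fg [Group.FG G] (h : IsFCw w G) (x : G) :
    (conjSet x (wValues w G)⁻¹).encard = (conjSet x (wValues w G)).encard := by
  have hnormal (α : MulAut G) :
      ∀ β ∈ MulAut.conj '' wValues w G, α * β * α⁻¹ ∈ MulAut.conj '' wValues w G := by
    rintro _ ⟨s, hs, rfl⟩
    exact ⟨α s, map_mem_wValues α.toMonoidHom hs, by ext; simp⟩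
  have key := encard_image_smul_eq_encard_image_inv_smul (finite_image_conj_of_fg h) hnormal x
  simpa [conjSet, Set.image_image, ← Set.image_inv_eq_inv, ← map_inv] using key

theorem IsFCw.finite_conjSet_inv (h : IsFCw w G) (x : G) :
    (conjSet x (wValues w G)⁻¹).Finite := by
  refine Set.finite_of_encard_le_coe (k := (conjSet x (wValues w G)).ncard) ?_
  by_contra! hlt
  obtain ⟨y, hy, hyx⟩ := natCast_lt_encard_iff_exists_injective.1 hlt
  choose s hs hsy using hyx
  obtain ⟨K, hK, hxK, hsK⟩ := exists_fg_subset_image_wValues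
    (Set.finite_range fun j => (s j)⁻¹) (Set.range_subset_iff.2 hs) x
  have := (Group.fg_iff_subgroup_fg K).2 hK
  let x' : K := ⟨x, hxK⟩
  have hlt' : ((conjSet x (wValues w G)).ncard : ℕ∞) <
      (K.subtype '' conjSet x' (wValues w K)⁻¹).encard := by
    refine natCast_lt_encard_iff_exists_injective.2 ⟨y, hy, fun j => ?_⟩
    obtain ⟨t, ht, hts⟩ := hsK ⟨j, rfl⟩
    rw [← hsy j, image_conjSet]
    exact ⟨s j, ⟨t⁻¹, Set.inv_mem_inv.2 ht, by simp_all⟩, rfl⟩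
  refine hlt'.not_ge ?_
  calc (K.subtype '' conjSet x' (wValues w K)⁻¹).encard
      = (conjSet x' (wValues w K)⁻¹).encard := K.subtype_injective.encard_image _
    _ = (conjSet x' (wValues w K)).encard := (h.subgroup K).encard_conjSet_inv_of_fg x'
    _ = (K.subtype '' conjSet x' (wValues w K)).encard :=
        (K.subtype_injective.encard_image _).symm
    _ ≤ (conjSet x (wValues w G)).encard :=
        Set.encard_le_encard (image_conjSet_wValues_subset K.subtype x')
    _ = (conjSet x (wValues w G)).ncard := (h x).cast_ncard_eq.symm

theorem isFCw_commWord (h : IsFCw w G) (m : ℕ) : IsFCw (commWord m w) G := by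
  induction m with
  | zero => simpa only [IsFCw, wValues_commWord_zero] using h
  | succ m ih =>
    intro x
    refine ((ih.finite_conjSet_inv x).biUnion fun y _ => ih y).subset ?_
    rw [wValues_commWord_succ]
    rintro _ ⟨_, ⟨s, hs, g, -, rfl⟩, rfl⟩
    refine Set.mem_biUnion ⟨s⁻¹, Set.inv_mem_inv.2 hs, rfl⟩
      ⟨g⁻¹ * s * g, by simpa using conj_mem_wValues hs g⁻¹, ?_⟩
    simp only [pcomm]; group

theorem isFCEmbedded_verbalSubgroup_of_fg (hFC : IsFCw w G)
    (hfg : ∀ K : Subgroup G, K.FG → IsFCEmbedded (verbalSubgroup w K)) :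
    IsFCEmbedded (verbalSubgroup w G) := by
  intro x
  obtain ⟨F, hFw, hF, hFx⟩ := Set.Finite.exists_subset_finite_image_eq (hFC x) subset_rfl
  obtain ⟨K, hK, hxK, hFK⟩ := exists_fg_subset_image_wValues hF hFw x
  have hE : (K.subtype '' conjSet ⟨x, hxK⟩ (verbalSubgroup w K : Set K)).Finite :=
    (hfg K hK _).image _
  refine hE.subset (conjSet_closure_subset hE ⟨_, self_mem_conjSet (one_mem _), rfl⟩ ?_)
  rintro s hs _ ⟨_, ⟨g, hg, rfl⟩, rfl⟩
  obtain ⟨f, hf, hfx⟩ := hFx.ge (Set.mem_image_of_mem _ (conj_mem_wValues hs (g : G)))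
  obtain ⟨t, ht, rfl⟩ := hFK hf
  refine ⟨_, ⟨t * g, mul_mem (Subgroup.subset_closure ht) hg, rfl⟩, ?_⟩
  calc K.subtype ((t * g)⁻¹ * ⟨x, hxK⟩ * (t * g))
      = (g : G)⁻¹ * ((t : G)⁻¹ * x * t) * g := by simp [mul_assoc]
    _ = (g : G)⁻¹ * ((g * s * (g : G)⁻¹)⁻¹ * x * (g * s * (g : G)⁻¹)) * g := by rw [← hfx]; rfl
    _ = s⁻¹ * K.subtype (g⁻¹ * ⟨x, hxK⟩ * g) * s := by simp [mul_assoc]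

theorem IsFracConcise.finite_verbalSubgroup_commWord.{u, z} {m : ℕ}
    (hw : IsFracConcise.{z} w (m + 1)) {Q : Type u} [Group Q] [Small.{z} Q]
    (hQ : (wValues w Q).Finite) : (verbalSubgroup (commWord m w) Q : Set Q).Finite := by
  let e : Shrink.{z} Q ≃* Q := Shrink.mulEquiv
  have hShrink : (wValues w (Shrink.{z} Q)).Finite := by
    rw [← image_wValues_of_surjective (φ := e.symm.toMonoidHom) e.symm.surjective]
    exact hQ.image _
  rw [← map_verbalSubgroup_of_surjective (φ := e.toMonoidHom) e.surjective, Subgroup.coe_map,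
    verbalSubgroup_commWord]
  exact (hw _ hShrink).image _

theorem IsFCw.isFCEmbedded_of_fg.{u, z} {G : Type u} [Group G] [Group.FG G] (hFC : IsFCw w G)
    {m : ℕ} (hw : IsFracConcise.{z} w (m + 1)) :
    IsFCEmbedded (verbalSubgroup (commWord m w) G) := by
  intro x
  let π : G →* (MulAut.conj : G →* MulAut G).range := MulAut.conj.rangeRestrict
  have hπ : Surjective π := MonoidHom.rangeRestrict_surjective _
  have := countable_of_fg G
  have := hπ.countable
  have hInn : (wValues w (MulAut.conj : G →* MulAut G).range).Finite := by
    refine .of_finite_image (f := Subtype.val) ?_ Subtype.val_injective.injOn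
    rw [← image_wValues_of_surjective hπ, Set.image_image]
    exact finite_image_conj_of_fg hFC
  have hN := hw.finite_verbalSubgroup_commWord hInn
  rw [← map_verbalSubgroup_of_surjective hπ, Subgroup.coe_map] at hN
  refine (hN.image fun α : (MulAut.conj : G →* MulAut G).range => (α : MulAut G)⁻¹ x).subset ?_
  rintro _ ⟨g, hg, rfl⟩
  exact ⟨π g, Set.mem_image_of_mem π hg, by simp [π]⟩

theorem IsFCw.isFCEmbedded.{u, z} {G : Type u} [Group G] (hFC : IsFCw w G) {m : ℕ}
    (hw : IsFracConcise.{z} w (m + 1)) : IsFCEmbedded (verbalSubgroup (commWord m w) G) :=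
  isFCEmbedded_verbalSubgroup_of_fg (isFCw_commWord hFC m) fun K hK => by
    have := (Group.fg_iff_subgroup_fg K).2 hK
    exact (hFC.subgroup K).isFCEmbedded_of_fg hw

theorem IsBFCw.isFCw (h : IsBFCw w G) : IsFCw w G := by
  obtain ⟨c, hc⟩ := h
  exact fun x => (hc x).1

end FC

section Ultrapower

variable {n : ℕ} {w : FreeGroup (Fin n)} {G ι : Type*} [Group G]

theorem injective_germ_coe_iff {α J : Type*} [Finite J] {l : Ultrafilter ι} {f : J → ι → α} :
    Injective (fun j => (f j : Germ (l : Filter ι) α)) ↔ ∀ᶠ i in l, Injective fun j => f j i := by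
  simp only [Injective, Germ.coe_eq, EventuallyEq, Filter.eventually_all,
    Ultrafilter.eventually_imp, Filter.eventually_const]

theorem mem_wValues_germ {l : Filter ι} {y : Germ l G} :
    y ∈ wValues w (Germ l G) ↔ ∃ s : ι → G, (∀ i, s i ∈ wValues w G) ∧ (s : Germ l G) = y := by
  have hsurj : Surjective (Germ.coeMulHom l : (ι → G) →* Germ l G) := Quot.mk_surjective
  rw [← image_wValues_of_surjective hsurj]
  simp only [Set.mem_image, mem_wValues_pi]
  rfl

theorem germ_coe_mem_verbalSubgroup {l : Filter ι} {d : ℕ} {s : ι → G}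
    (hs : ∀ i, s i ∈ wValues w G ^ d) : (s : Germ l G) ∈ verbalSubgroup w (Germ l G) := by
  induction d generalizing s with
  | zero =>
    obtain rfl : s = 1 := funext hs
    exact one_mem _
  | succ d ih =>
    simp only [pow_succ, Set.mem_mul] at hs
    choose a ha b hb hab using hs
    obtain rfl : a * b = s := funext hab
    exact mul_mem (ih ha) (Subgroup.subset_closure (mem_wValues_germ.2 ⟨b, hb, rfl⟩))

theorem IsBFCw.germ (h : IsBFCw w G) (l : Ultrafilter ι) :
    IsBFCw w (Germ (l : Filter ι) G) := by
  simp only [IsBFCw, ← Set.encard_le_coe_iff_finite_ncard_le] at h ⊢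
  obtain ⟨c, hc⟩ := h
  refine ⟨c, fun x => ?_⟩
  by_contra! hlt
  obtain ⟨y, hy, hyx⟩ := natCast_lt_encard_iff_exists_injective.1 hlt
  induction x using Germ.inductionOn with | _ x
  choose g hg hgy using hyx
  choose s hs hsg using fun j => mem_wValues_germ.1 (hg j)
  have hy' : y = fun j => (((s j)⁻¹ * x * s j : ι → G) : Germ (l : Filter ι) G) := by
    ext j
    rw [← hgy j, ← hsg j]
    rfl
  obtain ⟨i, hi⟩ := (injective_germ_coe_iff.1 (hy' ▸ hy)).exists
  have hlt_i : (c : ℕ∞) < (conjSet (x i) (wValues w G)).encard :=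
    natCast_lt_encard_iff_exists_injective.2 ⟨_, hi, fun j => ⟨s j i, hs j i, rfl⟩⟩
  exact hlt_i.not_ge (hc (x i))

theorem isBFCEmbedded_verbalSubgroup_of_germ
    (h : IsFCEmbedded (verbalSubgroup w (Germ (hyperfilter ℕ : Filter ℕ) G))) :
    IsBFCEmbedded (verbalSubgroup w G) := by
  by_contra hG
  choose x hx using exists_lt_encard_conjSet_pow one_mem_wValues hG
  have hfin := h (x : Germ (hyperfilter ℕ : Filter ℕ) G)
  set D := conjSet (x : Germ (hyperfilter ℕ : Filter ℕ) G) _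
  let d := D.ncard
  have hs (i : ℕ) : ∃ s : Fin (d + 1) → G, (∀ j, s j ∈ wValues w G ^ d) ∧
      (d ≤ i → Injective fun j => (s j)⁻¹ * x i * s j) := by
    by_cases hdi : d ≤ i
    · obtain ⟨y, hy, hyx⟩ := natCast_lt_encard_iff_exists_injective.1 (hx i d hdi)
      choose s hs hsy using hyx
      exact ⟨s, hs, fun _ => (funext hsy : _ = y) ▸ hy⟩
    · exact ⟨1, fun _ => Set.one_mem_pow one_mem_wValues, fun hdi' => absurd hdi' hdi⟩
  choose s hs hinj using hs
  have hlarge : ∀ᶠ i in (hyperfilter ℕ : Filter ℕ), d ≤ i :=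
    (eventually_ge_atTop d).filter_mono Nat.hyperfilter_le_atTop
  have hinjGerm := injective_germ_coe_iff.2 (hlarge.mono hinj)
  have hlt : (d : ℕ∞) < D.encard := by
    refine natCast_lt_encard_iff_exists_injective.2 ⟨_, hinjGerm, fun j => ?_⟩
    exact ⟨_, germ_coe_mem_verbalSubgroup fun i => hs i j, rfl⟩
  exact hlt.ne hfin.cast_ncard_eq

end Ultrapower

/-- Theorem B: if `w` is `(1/(m+1))`-concise and `G` is a `BFC(w)`-group,
then `[w(G), G, ..., G]` (`G` repeated `m` times) is `BFC`-embedded in `G`. -/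
theorem statement_7 {n : ℕ} (m : ℕ) (w : FreeGroup (Fin n))
    (hw : IsFracConcise w (m + 1)) (G : Type*) [Group G] (hBFC : IsBFCw w G) :
    IsBFCEmbedded (iterCommSub G (verbalSubgroup w G) m) := by
  rw [← verbalSubgroup_commWord]
  apply isBFCEmbedded_verbalSubgroup_of_germ
  exact (hBFC.germ (hyperfilter ℕ)).isFCw.isFCEmbedded hw
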